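/- arXiv:math/0611890 — 2 statements merged into one kernel-verified Lean document; each statement's English description precedes it below -/
import Mathlib

section
/- The system B = {ψ_m}_{m=1}^∞ is uniformly bounded: there is a constant C such that |ψ_m(t)| ≤ C for all m ≥ 1 and almost every t ∈ [0,1]. In fact, since each Walsh function has modulus 1, |ψ_i^{(k)}(t)| ≤ Σ_{j=1}^{N_k} |a_{ij}^{(10^k)}|, which is bounded by the uniform row ℓ_1-bound of the Olevskiĭ matrices. -/
open MeasureTheory Filter

noncomputable section

/-- Rademacher functions `r_k(t) = sign (sin (2^k π t))`, for `k ≥ 1`. -/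
def rademacher (k : ℕ) (t : ℝ) : ℝ := Real.sign (Real.sin ((2:ℝ) ^ k * Real.pi * t))

/-- The Walsh system: for `n = ∑ ε_j 2^(j-1)`, `W_n = ∏ r_j^(ε_j)`. -/
def walsh (n : ℕ) (t : ℝ) : ℝ :=
  ∏ j ∈ Finset.range n, if n.testBit j then rademacher (j + 1) t else 1

/-- The Olevskiĭ matrix entries `a_{ij}^{(k)}`, with `1 ≤ i, j ≤ 2^k` (1-based indices). -/
def olevskii (k i j : ℕ) : ℝ :=
  if j = 1 then (2:ℝ) ^ (-(k:ℝ) / 2)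
  else
    let s := Nat.log 2 (j - 1)
    let ν := j - 2 ^ s
    if (ν - 1) * 2 ^ (k - s) < i ∧ i ≤ (2 * ν - 1) * 2 ^ (k - s - 1) then
      (2:ℝ) ^ (((s:ℝ) - k) / 2)
    else if (2 * ν - 1) * 2 ^ (k - s - 1) < i ∧ i ≤ ν * 2 ^ (k - s) then
      -((2:ℝ) ^ (((s:ℝ) - k) / 2))
    else 0

/-- `N_k = 2^(10^k)`. -/
def Nn (k : ℕ) : ℕ := 2 ^ 10 ^ k

/-- `F_0 = 0`, `F_k = F_(k-1) + N_k - 1`. -/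
def Fn : ℕ → ℕ
  | 0 => 0
  | k + 1 => Fn k + Nn (k + 1) - 1

/-- `φ_k`, the `k`-th (1-based) Walsh function that is not a Rademacher function,
in the Walsh order. -/
def phi (k : ℕ) : ℝ → ℝ := walsh (Nat.nth (fun n => ¬ ∃ m : ℕ, n = 2 ^ m) (k - 1))

/-- `ψ_i^{(k)} = φ_k/√N_k + ∑_{j=2}^{N_k} a_{ij}^{(10^k)} r_{F_{k-1}+j-1}`. -/
def psiBlock (k i : ℕ) : ℝ → ℝ := fun t =>
  phi k t / Real.sqrt (Nn k) +
    ∑ j ∈ Finset.Icc 2 (Nn k), olevskii (10 ^ k) i j * rademacher (Fn (k - 1) + j - 1) t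

/-- Cumulative block lengths: `cum k = N_1 + ⋯ + N_k`. -/
def cum : ℕ → ℕ
  | 0 => 0
  | k + 1 => cum k + Nn (k + 1)

lemma le_cum (k : ℕ) : k ≤ cum k := by
  induction k with
  | zero => simp [cum]
  | succ k ih =>
      have h : 1 ≤ Nn (k + 1) := Nat.one_le_two_pow
      simp only [cum]; omega

/-- `psi m` is `ψ_{m+1}`, the `(m+1)`-th element of the system
`B = (ψ_1^{(1)}, …, ψ_{N_1}^{(1)}, ψ_1^{(2)}, …)` (0-based global indexing). -/
def psi (m : ℕ) : ℝ → ℝ :=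
  let k := Nat.find (show ∃ k, m + 1 ≤ cum k from ⟨m + 1, le_cum (m + 1)⟩)
  psiBlock k (m + 1 - cum (k - 1))

/-- `⟨f, g⟩ = ∫_0^1 f g`. -/
def inner01 (f g : ℝ → ℝ) : ℝ := ∫ t in Set.Icc (0:ℝ) 1, f t * g t

/-- The `L_p([0,1])` norm of a function. -/
def LpNorm (p : ℝ) (f : ℝ → ℝ) : ℝ :=
  (∫ t in Set.Icc (0:ℝ) 1, |f t| ^ p) ^ (1 / p)

/-- `ρ` is a greedy ordering for the coefficient sequence `c`. -/
def IsGreedyOrdering (c : ℕ → ℝ) (ρ : ℕ → ℕ) : Prop :=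
  Function.Injective ρ ∧ {j | c j ≠ 0} ⊆ Set.range ρ ∧
    ∀ j k : ℕ, j < k → |c (ρ k)| < |c (ρ j)| ∨ (|c (ρ k)| = |c (ρ j)| ∧ ρ j < ρ k)

end

/-!
For each `s < k`, the nonzero entries of the columns `2 ^ s < j ≤ 2 ^ (s + 1)` of the Olevskiĭ
matrix `A^k` have modulus `2 ^ ((s - k) / 2)`, and the supports of these columns are disjoint dyadic
intervals. A row therefore has at most one nonzero entry at each level `s`, and its `ℓ_1`-norm is
dominated by a geometric series of ratio `√2` whose last term is less than `1`. The row norms enter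
because `|r_j|, |W_n| ≤ 1` and the coefficient `1 / √N_k` of `φ_k` is the entry in the first column.
-/

open Finset

lemma abs_real_sign_le_one (x : ℝ) : |Real.sign x| ≤ 1 := by
  rcases Real.sign_apply_eq x with h | h | h <;> simp [h]

lemma abs_rademacher_le_one (k : ℕ) (t : ℝ) : |rademacher k t| ≤ 1 :=
  abs_real_sign_le_one _

lemma abs_walsh_le_one (n : ℕ) (t : ℝ) : |walsh n t| ≤ 1 := by
  rw [walsh, abs_prod]
  refine prod_le_one (fun _ _ => abs_nonneg _) fun j _ => ?_
  split_ifs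
  · exact abs_rademacher_le_one _ t
  · exact abs_one.le

lemma abs_phi_le_one (k : ℕ) (t : ℝ) : |phi k t| ≤ 1 :=
  abs_walsh_le_one _ t

lemma olevskii_one (k i : ℕ) : olevskii k i 1 = (2 : ℝ) ^ (-(k : ℝ) / 2) :=
  if_pos rfl

lemma olevskii_one_eq_inv_sqrt (k i : ℕ) : olevskii k i 1 = (√(2 ^ k))⁻¹ := by
  rw [olevskii_one, neg_div, Real.rpow_neg zero_le_two, Real.sqrt_eq_rpow,
    ← Real.rpow_natCast_mul zero_le_two, mul_one_div]

lemma abs_ite_ite_neg {G : Type*} [AddCommGroup G] [LinearOrder G] [IsOrderedAddMonoid G]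
    (p q : Prop) [Decidable p] [Decidable q] (c : G) :
    |if p then c else if q then -c else 0| = if p ∨ q then |c| else 0 := by
  by_cases hp : p <;> by_cases hq : q <;> simp [hp, hq]

/-- The column `j = 2 ^ s + ν` is written with `ν = v + 1` to avoid truncated subtraction. -/
lemma abs_olevskii_two_pow_add {k s v : ℕ} (hs : s < k) (hv : v < 2 ^ s) (i : ℕ) :
    |olevskii k i (2 ^ s + v + 1)| =
      (Set.Ioc (v * 2 ^ (k - s)) ((v + 1) * 2 ^ (k - s))).indicator
        (fun _ => (2 : ℝ) ^ (((s : ℝ) - k) / 2)) i := by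
  have level : Nat.log 2 (2 ^ s + v) = s :=
    Nat.log_eq_of_pow_le_of_lt_pow (Nat.le_add_right _ _) (by rw [pow_succ]; omega)
  have position : 2 ^ s + v + 1 - 2 ^ s = v + 1 := by omega
  have midpoint : 2 * (v + 1) - 1 = 2 * v + 1 := by omega
  have width : 2 ^ (k - s) = 2 * 2 ^ (k - s - 1) := by
    rw [← pow_succ', Nat.sub_add_cancel (Nat.sub_pos_of_lt hs)]
  have halves : Set.Ioc (v * 2 ^ (k - s)) ((v + 1) * 2 ^ (k - s)) =
      Set.Ioc (v * 2 ^ (k - s)) ((2 * v + 1) * 2 ^ (k - s - 1)) ∪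
        Set.Ioc ((2 * v + 1) * 2 ^ (k - s - 1)) ((v + 1) * 2 ^ (k - s)) :=
    (Set.Ioc_union_Ioc_eq_Ioc
      (by rw [width, ← mul_assoc]; exact Nat.mul_le_mul_right _ (by omega))
      (by rw [width, ← mul_assoc]; exact Nat.mul_le_mul_right _ (by omega))).symm
  have entry_pos : (0 : ℝ) < 2 ^ (((s : ℝ) - k) / 2) := by positivity
  rw [olevskii, if_neg (by have := Nat.two_pow_pos s; omega)]
  simp only [Nat.add_sub_cancel, level, position, midpoint, abs_ite_ite_neg, abs_of_pos entry_pos,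
    halves, Set.indicator_apply, Set.mem_union, Set.mem_Ioc]

lemma sum_indicator_le_of_pairwiseDisjoint {ι α M : Type*} [AddCommMonoid M] [Preorder M]
    {I : Finset ι} {A : ι → Set α} (hA : (I : Set ι).PairwiseDisjoint A) {f : α → M}
    (hf : ∀ x, 0 ≤ f x) (x : α) : ∑ v ∈ I, (A v).indicator f x ≤ f x := by
  rw [← indicator_biUnion_apply I A hA]
  exact Set.indicator_le_self' (fun x _ => hf x) x

lemma sum_abs_olevskii_level_le {k s : ℕ} (hs : s < k) (i : ℕ) :
    ∑ v ∈ range (2 ^ s), |olevskii k i (2 ^ s + v + 1)| ≤ (2 : ℝ) ^ (((s : ℝ) - k) / 2) := by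
  have endpoints_monotone : Monotone fun v : ℕ => v * 2 ^ (k - s) :=
    fun _ _ h => Nat.mul_le_mul_right _ h
  rw [sum_congr rfl fun v hv => abs_olevskii_two_pow_add hs (mem_range.1 hv) i]
  exact sum_indicator_le_of_pairwiseDisjoint
    (endpoints_monotone.pairwise_disjoint_on_Ioc_succ.set_pairwise _) (fun _ => by positivity) i

/-- The constant `c = 1 + √2` solves `c + 1 = √2 * c`, which makes the induction on `n` close. -/
lemma sum_range_abs_olevskii_le {k n : ℕ} (hn : n ≤ k) (i : ℕ) :
    ∑ j ∈ range (2 ^ n), |olevskii k i (j + 1)| ≤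
      (1 + √2) * (2 : ℝ) ^ (((n : ℝ) - k) / 2) := by
  induction n with
  | zero =>
    have first_entry_pos : (0 : ℝ) < 2 ^ (-(k : ℝ) / 2) := by positivity
    simpa [olevskii_one, abs_of_pos first_entry_pos] using
      le_mul_of_one_le_left first_entry_pos.le (le_add_of_nonneg_right (Real.sqrt_nonneg 2))
  | succ n ih =>
    have next_level : (2 : ℝ) ^ (((n + 1 : ℕ) - k : ℝ) / 2) = √2 * 2 ^ (((n : ℝ) - k) / 2) := by
      rw [Real.sqrt_eq_rpow, ← Real.rpow_add two_pos]
      push_cast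
      ring_nf
    calc ∑ j ∈ range (2 ^ (n + 1)), |olevskii k i (j + 1)|
        = ∑ j ∈ range (2 ^ n), |olevskii k i (j + 1)| +
            ∑ v ∈ range (2 ^ n), |olevskii k i (2 ^ n + v + 1)| := by
          rw [pow_succ, mul_two, sum_range_add]
      _ ≤ (1 + √2) * 2 ^ (((n : ℝ) - k) / 2) + 2 ^ (((n : ℝ) - k) / 2) :=
          add_le_add (ih (Nat.le_of_succ_le hn)) (sum_abs_olevskii_level_le hn i)
      _ = (1 + √2) * 2 ^ (((n + 1 : ℕ) - k : ℝ) / 2) := by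
          rw [next_level]
          linear_combination -(2 : ℝ) ^ (((n : ℝ) - k) / 2) * Real.mul_self_sqrt zero_le_two

lemma sum_abs_olevskii_row_le (k i : ℕ) :
    ∑ j ∈ Icc 1 (2 ^ k), |olevskii k i j| ≤ 1 + √2 := by
  calc ∑ j ∈ Icc 1 (2 ^ k), |olevskii k i j|
      = ∑ j ∈ range (2 ^ k), |olevskii k i (j + 1)| := by
        rw [range_eq_Ico, sum_Ico_add' (fun j => |olevskii k i j|), zero_add,
          Ico_add_one_right_eq_Icc]
    _ ≤ 1 + √2 := by simpa using sum_range_abs_olevskii_le le_rfl i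

lemma abs_psiBlock_le_sum_abs_olevskii (k i : ℕ) (t : ℝ) :
    |psiBlock k i t| ≤ ∑ j ∈ Icc 1 (Nn k), |olevskii (10 ^ k) i j| := by
  have walsh_term : |phi k t / √(Nn k)| ≤ |olevskii (10 ^ k) i 1| := by
    rw [olevskii_one_eq_inv_sqrt, Nn, Nat.cast_pow, Nat.cast_ofNat, div_eq_mul_inv, abs_mul]
    exact mul_le_of_le_one_left (abs_nonneg _) (abs_phi_le_one k t)
  have rademacher_term (j : ℕ) :
      |olevskii (10 ^ k) i j * rademacher (Fn (k - 1) + j - 1) t| ≤ |olevskii (10 ^ k) i j| := by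
    rw [abs_mul]
    exact mul_le_of_le_one_right (abs_nonneg _) (abs_rademacher_le_one _ t)
  calc |psiBlock k i t|
      ≤ |phi k t / √(Nn k)| +
          ∑ j ∈ Icc 2 (Nn k), |olevskii (10 ^ k) i j * rademacher (Fn (k - 1) + j - 1) t| :=
        (abs_add_le _ _).trans (add_le_add_right (abs_sum_le_sum_abs _ _) _)
    _ ≤ |olevskii (10 ^ k) i 1| + ∑ j ∈ Icc 2 (Nn k), |olevskii (10 ^ k) i j| :=
        add_le_add walsh_term (sum_le_sum fun j _ => rademacher_term j)
    _ = ∑ j ∈ Icc 1 (Nn k), |olevskii (10 ^ k) i j| :=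
        add_sum_Ioc_eq_sum_Icc (f := fun j => |olevskii (10 ^ k) i j|) Nat.one_le_two_pow

lemma abs_psiBlock_le (k i : ℕ) (t : ℝ) : |psiBlock k i t| ≤ 1 + √2 :=
  (abs_psiBlock_le_sum_abs_olevskii k i t).trans (sum_abs_olevskii_row_le (10 ^ k) i)

lemma abs_psi_le (m : ℕ) (t : ℝ) : |psi m t| ≤ 1 + √2 :=
  abs_psiBlock_le _ _ t

/-- The system `B = {ψ_m}` is uniformly bounded, and in fact each `|ψ_i^{(k)}|` is
bounded by the `ℓ_1`-norm of the `i`-th row of the Olevskiĭ matrix `A^{10^k}`. -/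
theorem stmt_7 :
    (∃ C : ℝ, ∀ m : ℕ, ∀ t ∈ Set.Icc (0:ℝ) 1, |psi m t| ≤ C) ∧
    (∀ k : ℕ, 1 ≤ k → ∀ i ∈ Finset.Icc 1 (Nn k), ∀ t ∈ Set.Icc (0:ℝ) 1,
      |psiBlock k i t| ≤ ∑ j ∈ Finset.Icc 1 (Nn k), |olevskii (10 ^ k) i j|) :=
  ⟨⟨1 + √2, fun m t _ => abs_psi_le m t⟩,
    fun k _ i _ t _ => abs_psiBlock_le_sum_abs_olevskii k i t⟩
end

section
/- Let N_k = 2^{10^k}. Suppose B ⊂ ℕ is a finite nonempty set, and for each k ∈ B let λ_k be a real number with N_k^{3/4} < λ_k ≤ N_k. Let L = max B. Then Σ_{k∈B, k<L} λ_k/√N_k ≤ 2 λ_L/√N_L, and hence Σ_{k∈B} λ_k/√N_k ≤ 3 λ_L/√N_L ≤ 3 √λ_L ≤ 3 (Σ_{k∈B} λ_k)^{1/2}. -/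
open MeasureTheory Filter

/-!
Everything below the top index is negligible. The numbers `√N_k` at least double from one index to
the next, so `∑_{k<L} √N_k ≤ 2 √N_{L-1}`, and `√N_{L-1} ≤ N_L^{1/4}` because `N_{L-1}² ≤ N_L`. Since
`λ_k/√N_k ≤ √N_k` for `k < L`, while `N_L^{1/4} = N_L^{3/4}/√N_L ≤ λ_L/√N_L`, the terms below `L`
add up to at most twice the term at `L`.
-/

section SquareRoots

variable {x y : ℝ}

lemma two_mul_sqrt_le_sqrt (h : 4 * x ≤ y) : 2 * √x ≤ √y := by
  have sqrt_four : √(4 : ℝ) = 2 := by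
    rw [show (4 : ℝ) = 2 ^ 2 by norm_num, Real.sqrt_sq zero_le_two]
  calc 2 * √x = √(4 * x) := by rw [Real.sqrt_mul zero_le_four, sqrt_four]
    _ ≤ √y := Real.sqrt_le_sqrt h

lemma sqrt_le_rpow_one_quarter (h : x ^ 2 ≤ y) : √x ≤ y ^ ((1 : ℝ) / 4) := by
  have hy : 0 ≤ y := (sq_nonneg x).trans h
  calc √x ≤ √(√y) := Real.sqrt_le_sqrt (Real.le_sqrt_of_sq_le h)
    _ = y ^ ((1 : ℝ) / 4) := by
      rw [Real.sqrt_eq_rpow, Real.sqrt_eq_rpow, ← Real.rpow_mul hy]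
      norm_num

lemma rpow_three_quarters_div_sqrt (hx : 0 ≤ x) :
    x ^ ((3 : ℝ) / 4) / √x = x ^ ((1 : ℝ) / 4) := by
  rw [Real.sqrt_eq_rpow, ← Real.rpow_sub' hx (by norm_num)]
  norm_num

lemma div_sqrt_le_sqrt_left (hx : 0 ≤ x) (h : x ≤ y) : x / √y ≤ √x :=
  calc x / √y = √x * (√x / √y) := by rw [← mul_div_assoc, Real.mul_self_sqrt hx]
    _ ≤ √x := mul_le_of_le_one_right (Real.sqrt_nonneg x)
      (div_le_one_of_le₀ (Real.sqrt_le_sqrt h) (Real.sqrt_nonneg y))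

lemma div_sqrt_le_sqrt_right (h : x ≤ y) : x / √y ≤ √y :=
  (div_le_div_of_nonneg_right h (Real.sqrt_nonneg y)).trans_eq Real.div_sqrt

end SquareRoots

lemma sum_range_le_of_two_mul_le_succ {R : Type*} [CommRing R] [LinearOrder R]
    [IsStrictOrderedRing R] {f : ℕ → R} (h0 : 0 ≤ f 0) (hf : ∀ k, 2 * f k ≤ f (k + 1)) (n : ℕ) :
    ∑ k ∈ Finset.range n, f k ≤ f n := by
  induction n with
  | zero => simpa using h0
  | succ n ih =>
    rw [Finset.sum_range_succ]
    linarith [hf n]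

lemma filter_lt_max'_eq_erase {α : Type*} [LinearOrder α] (s : Finset α) (hs : s.Nonempty) :
    s.filter (fun a => a < s.max' hs) = s.erase (s.max' hs) := by
  ext a
  simp only [Finset.mem_filter, Finset.mem_erase, and_comm (a := a ≠ _)]
  exact and_congr_right fun ha => (s.le_max' a ha).lt_iff_ne

section GrowingSequence

variable {N lam : ℕ → ℝ}

lemma sum_range_sqrt_le_two_mul_rpow (hmul : ∀ k, 4 * N k ≤ N (k + 1))
    (hsq : ∀ k, N k ^ 2 ≤ N (k + 1)) {L : ℕ} (hN : 0 ≤ N L) :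
    ∑ k ∈ Finset.range L, √(N k) ≤ 2 * N L ^ ((1 : ℝ) / 4) := by
  cases L with
  | zero => simpa using Real.rpow_nonneg hN _
  | succ n =>
    have hsum : ∑ k ∈ Finset.range n, √(N k) ≤ √(N n) :=
      sum_range_le_of_two_mul_le_succ (Real.sqrt_nonneg _)
        (fun k => two_mul_sqrt_le_sqrt (hmul k)) n
    have hlast : √(N n) ≤ N (n + 1) ^ ((1 : ℝ) / 4) := sqrt_le_rpow_one_quarter (hsq n)
    rw [Finset.sum_range_succ]
    linarith

lemma sum_filter_lt_div_sqrt_le (hmul : ∀ k, 4 * N k ≤ N (k + 1))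
    (hsq : ∀ k, N k ^ 2 ≤ N (k + 1)) {s : Finset ℕ} {L : ℕ} (hN : 0 ≤ N L)
    (hle : ∀ k ∈ s, k < L → lam k ≤ N k) (hL : N L ^ ((3 : ℝ) / 4) ≤ lam L) :
    ∑ k ∈ s.filter (fun k => k < L), lam k / √(N k) ≤ 2 * lam L / √(N L) := by
  have hsub : s.filter (fun k => k < L) ⊆ Finset.range L := fun k hk =>
    Finset.mem_range.2 (Finset.mem_filter.1 hk).2
  calc ∑ k ∈ s.filter (fun k => k < L), lam k / √(N k)
      ≤ ∑ k ∈ s.filter (fun k => k < L), √(N k) := Finset.sum_le_sum fun k hk =>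
        have ⟨hks, hkL⟩ := Finset.mem_filter.1 hk
        div_sqrt_le_sqrt_right (hle k hks hkL)
    _ ≤ ∑ k ∈ Finset.range L, √(N k) :=
        Finset.sum_le_sum_of_subset_of_nonneg hsub fun k _ _ => Real.sqrt_nonneg (N k)
    _ ≤ 2 * N L ^ ((1 : ℝ) / 4) := sum_range_sqrt_le_two_mul_rpow hmul hsq hN
    _ = 2 * (N L ^ ((3 : ℝ) / 4) / √(N L)) := by rw [rpow_three_quarters_div_sqrt hN]
    _ ≤ 2 * (lam L / √(N L)) := by gcongr
    _ = 2 * lam L / √(N L) := (mul_div_assoc ..).symm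

theorem stmt_11_general (hpos : ∀ k, 0 < N k) (hmul : ∀ k, 4 * N k ≤ N (k + 1))
    (hsq : ∀ k, N k ^ 2 ≤ N (k + 1)) (B : Finset ℕ) (hne : B.Nonempty)
    (hnonneg : ∀ k ∈ B, 0 ≤ lam k) (hle : ∀ k ∈ B, lam k ≤ N k)
    (hmax : N (B.max' hne) ^ ((3 : ℝ) / 4) ≤ lam (B.max' hne)) :
    (∑ k ∈ B.filter (fun k => k < B.max' hne), lam k / √(N k)
        ≤ 2 * lam (B.max' hne) / √(N (B.max' hne))) ∧
    (∑ k ∈ B, lam k / √(N k) ≤ 3 * lam (B.max' hne) / √(N (B.max' hne))) ∧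
    (3 * lam (B.max' hne) / √(N (B.max' hne)) ≤ 3 * √(lam (B.max' hne))) ∧
    (3 * √(lam (B.max' hne)) ≤ 3 * (∑ k ∈ B, lam k) ^ ((1 : ℝ) / 2)) := by
  have hmem := B.max'_mem hne
  have hbelow := sum_filter_lt_div_sqrt_le hmul hsq (hpos _).le (fun k hk _ => hle k hk) hmax
  refine ⟨hbelow, ?_, ?_, ?_⟩
  · rw [← Finset.sum_erase_add B _ hmem, ← filter_lt_max'_eq_erase B hne]
    linear_combination hbelow
  · rw [mul_div_assoc]
    gcongr
    exact div_sqrt_le_sqrt_left (hnonneg _ hmem) (hle _ hmem)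
  · rw [← Real.sqrt_eq_rpow]
    gcongr
    exact Finset.single_le_sum hnonneg hmem

end GrowingSequence

lemma two_le_Nn (k : ℕ) : 2 ≤ Nn k :=
  Nat.le_self_pow (by positivity) 2

lemma Nn_pos (k : ℕ) : 0 < Nn k :=
  two_pos.trans_le (two_le_Nn k)

lemma Nn_succ (k : ℕ) : Nn (k + 1) = Nn k ^ 10 := by
  rw [Nn, Nn, ← pow_mul, pow_succ]

lemma Nn_sq_le_Nn_succ (k : ℕ) : Nn k ^ 2 ≤ Nn (k + 1) := by
  rw [Nn_succ]
  exact Nat.pow_le_pow_right (Nn_pos k) (by norm_num)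

lemma four_mul_Nn_le_Nn_succ (k : ℕ) : 4 * Nn k ≤ Nn (k + 1) :=
  calc 4 * Nn k = 2 ^ 2 * Nn k := by norm_num
    _ ≤ Nn k ^ 2 * Nn k := by gcongr; exact two_le_Nn k
    _ = Nn k ^ 3 := (pow_succ ..).symm
    _ ≤ Nn k ^ 10 := Nat.pow_le_pow_right (Nn_pos k) (by norm_num)
    _ = Nn (k + 1) := (Nn_succ k).symm

/-- If `N_k^{3/4} < λ_k ≤ N_k` for `k ∈ B` and `L = max B`, then
`∑_{k∈B, k<L} λ_k/√N_k ≤ 2 λ_L/√N_L`, hence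
`∑_{k∈B} λ_k/√N_k ≤ 3 λ_L/√N_L ≤ 3 √λ_L ≤ 3 (∑_{k∈B} λ_k)^{1/2}`. -/
theorem stmt_11 (B : Finset ℕ) (hne : B.Nonempty) (hB1 : ∀ k ∈ B, 1 ≤ k)
    (lam : ℕ → ℝ)
    (hlam : ∀ k ∈ B, (Nn k : ℝ) ^ ((3:ℝ)/4) < lam k ∧ lam k ≤ (Nn k : ℝ)) :
    (∑ k ∈ B.filter (fun k => k < B.max' hne), lam k / Real.sqrt (Nn k)
        ≤ 2 * lam (B.max' hne) / Real.sqrt (Nn (B.max' hne))) ∧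
    (∑ k ∈ B, lam k / Real.sqrt (Nn k)
        ≤ 3 * lam (B.max' hne) / Real.sqrt (Nn (B.max' hne))) ∧
    (3 * lam (B.max' hne) / Real.sqrt (Nn (B.max' hne))
        ≤ 3 * Real.sqrt (lam (B.max' hne))) ∧
    (3 * Real.sqrt (lam (B.max' hne)) ≤ 3 * (∑ k ∈ B, lam k) ^ ((1:ℝ)/2)) := by
  have hnonneg : ∀ k ∈ B, 0 ≤ lam k := fun k hk => le_trans (by positivity) (hlam k hk).1.le
  exact stmt_11_general (fun k => mod_cast Nn_pos k) (fun k => mod_cast four_mul_Nn_le_Nn_succ k)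
    (fun k => mod_cast Nn_sq_le_Nn_succ k) B hne hnonneg (fun k hk => (hlam k hk).2)
    (hlam _ (B.max'_mem hne)).1.le
end
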